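/- Let {p₁, ..., pₙ} be a linearly independent set of vectors in a PN space (V, ν, τ, τ*) in which strong convergence induces a topological vector space structure. Then there exist a constant c ≠ 0 and a probabilistic norm ν' on ℝ (making ℝ a strong TVS PN space) such that for all real scalars α₁, ..., αₙ: ν_{α₁p₁ + ⋯ + αₙpₙ} ≤ ν'_{c(|α₁| + ⋯ + |αₙ|)}. -/

import Mathlib

open Filter Topology

noncomputable section

/-- A distance distribution function: nondecreasing, left-continuous,
vanishing on `(-∞,0]`, bounded by `1`. -/
def DDF (F : ℝ → ℝ) : Prop :=
  Monotone F ∧ (∀ x ≤ 0, F x = 0) ∧ (∀ x, F x ≤ 1) ∧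
    ∀ x, Tendsto F (nhdsWithin x (Set.Iio x)) (nhds (F x))

/-- The unit step at `0`. -/
def eps0 : ℝ → ℝ := fun x => if x ≤ 0 then 0 else 1

/-- The unit step at `c`. -/
def epsc (c : ℝ) : ℝ → ℝ := fun x => if x ≤ c then 0 else 1

/-- `ε∞`: identically 0 on `ℝ` (value 1 only at `+∞`). -/
def epsInf : ℝ → ℝ := fun _ => 0

/-- Membership in `D⁺`: the distribution function tends to `1` at `+∞`. -/
def InDPlus (F : ℝ → ℝ) : Prop := Tendsto F atTop (nhds 1)

/-- Weak convergence of distribution functions. -/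
def WeakConv (Fn : ℕ → ℝ → ℝ) (F : ℝ → ℝ) : Prop :=
  ∀ x, ContinuousAt F x → Tendsto (fun n => Fn n x) atTop (nhds (F x))

/-- A continuous triangle function on `Δ⁺`. -/
def IsTriangleFunction (τ : (ℝ → ℝ) → (ℝ → ℝ) → (ℝ → ℝ)) : Prop :=
  (∀ F G, DDF F → DDF G → DDF (τ F G)) ∧
  (∀ F G H, DDF F → DDF G → DDF H → τ (τ F G) H = τ F (τ G H)) ∧
  (∀ F G, DDF F → DDF G → τ F G = τ G F) ∧
  (∀ F G H, DDF F → DDF G → DDF H → F ≤ G → τ F H ≤ τ G H) ∧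
  (∀ F, DDF F → τ F eps0 = F) ∧
  (∀ (Fn : ℕ → ℝ → ℝ) F G, (∀ n, DDF (Fn n)) → DDF F → DDF G →
    WeakConv Fn F → WeakConv (fun n => τ (Fn n) G) (τ F G))

/-- A probabilistic normed space `(V, ν, τ, τ*)`. -/
structure IsPNSpace (V : Type) [AddCommGroup V] [Module ℝ V]
    (ν : V → ℝ → ℝ) (τ τs : (ℝ → ℝ) → (ℝ → ℝ) → (ℝ → ℝ)) : Prop where
  ddf : ∀ p, DDF (ν p)
  tri : IsTriangleFunction τ
  tris : IsTriangleFunction τs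
  tle : ∀ F G, DDF F → DDF G → τ F G ≤ τs F G
  n1 : ∀ p, ν p = eps0 ↔ p = 0
  n2 : ∀ p, ν (-p) = ν p
  n3 : ∀ p q, τ (ν p) (ν q) ≤ ν (p + q)
  n4 : ∀ (p : V) (l : ℝ), 0 ≤ l → l ≤ 1 →
    ν p ≤ τs (ν (l • p)) (ν ((1 - l) • p))

/-- Archimedean triangle function: no idempotents besides `ε₀` and `ε∞`. -/
def IsArchimedean (τ : (ℝ → ℝ) → (ℝ → ℝ) → (ℝ → ℝ)) : Prop :=
  ∀ F, DDF F → τ F F = F → F = eps0 ∨ F = epsInf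

/-- Strong convergence of a sequence in a PN space. -/
def StrongConv {V : Type} [AddCommGroup V] (ν : V → ℝ → ℝ)
    (q : ℕ → V) (p : V) : Prop :=
  ∀ l : ℝ, 0 < l → ∀ᶠ n in atTop, ν (q n - p) l > 1 - l

/-- Strongly Cauchy sequence in a PN space. -/
def StrongCauchy {V : Type} [AddCommGroup V] (ν : V → ℝ → ℝ) (q : ℕ → V) : Prop :=
  ∀ l : ℝ, 0 < l → ∃ N, ∀ m n, N ≤ m → N ≤ n → ν (q m - q n) l > 1 - l

/-- `A` is `D`-bounded: some `G ∈ D⁺` lies below all `ν p`, `p ∈ A`. -/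
def DBounded {V : Type} (ν : V → ℝ → ℝ) (A : Set V) : Prop :=
  ∃ G : ℝ → ℝ, DDF G ∧ InDPlus G ∧ ∀ p ∈ A, G ≤ ν p

/-- `A` is `D`-compact: every sequence in `A` has a subsequence strongly
convergent to a point of `A`. -/
def DCompact {V : Type} [AddCommGroup V] (ν : V → ℝ → ℝ) (A : Set V) : Prop :=
  ∀ q : ℕ → V, (∀ n, q n ∈ A) → ∃ φ : ℕ → ℕ, StrictMono φ ∧
    ∃ p ∈ A, StrongConv ν (q ∘ φ) p

/-- `A` is closed under strong convergence of sequences. -/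
def SeqClosed {V : Type} [AddCommGroup V] (ν : V → ℝ → ℝ) (A : Set V) : Prop :=
  ∀ (q : ℕ → V) (p : V), (∀ n, q n ∈ A) → StrongConv ν q p → p ∈ A

/-- The probabilistic radius `R_A(x) = l⁻ inf {ν p x : p ∈ A}`. -/
def probRadius {V : Type} (ν : V → ℝ → ℝ) (A : Set V) (x : ℝ) : ℝ :=
  ⨆ y : Set.Iio x, ⨅ p : A, ν (p : V) (y : ℝ)

lemma DDF.nonneg {F : ℝ → ℝ} (h : DDF F) (x : ℝ) : 0 ≤ F x := by
  rcases le_total x 0 with hx | hx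
  · exact (h.2.1 x hx).ge
  · rw [← h.2.1 0 le_rfl]; exact h.1 hx

/-- sup-convolution with the product -/
def tauP (F G : ℝ → ℝ) : ℝ → ℝ := fun x => ⨆ u : ℝ, F u * G (x - u)

lemma tauP_term_le_one {F G : ℝ → ℝ} (hF : DDF F) (hG : DDF G) (u v : ℝ) : F u * G v ≤ 1 :=
  mul_le_one₀ (hF.2.2.1 u) (hG.nonneg v) (hG.2.2.1 v)

lemma tauP_bdd {F G : ℝ → ℝ} (hF : DDF F) (hG : DDF G) (x : ℝ) :
    BddAbove (Set.range fun u : ℝ => F u * G (x - u)) :=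
  ⟨1, by rintro _ ⟨u, rfl⟩; exact tauP_term_le_one hF hG u _⟩

lemma le_tauP {F G : ℝ → ℝ} (hF : DDF F) (hG : DDF G) (x u : ℝ) :
    F u * G (x - u) ≤ tauP F G x := le_ciSup (tauP_bdd hF hG x) u

lemma tauP_le {F G : ℝ → ℝ} {x c : ℝ} (h : ∀ u, F u * G (x - u) ≤ c) : tauP F G x ≤ c :=
  ciSup_le h

lemma exists_lt_of_lt_tauP {F G : ℝ → ℝ} {x c : ℝ} (h : c < tauP F G x) :
    ∃ u, c < F u * G (x - u) := exists_lt_of_lt_ciSup h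

lemma tauP_nonneg {F G : ℝ → ℝ} (hF : DDF F) (hG : DDF G) (x : ℝ) : 0 ≤ tauP F G x :=
  (mul_nonneg (hF.nonneg 0) (hG.nonneg _)).trans (le_tauP hF hG x 0)

lemma tauP_mono {F G : ℝ → ℝ} (hF : DDF F) (hG : DDF G) : Monotone (tauP F G) := by
  intro x y hxy
  refine tauP_le fun u => le_trans ?_ (le_tauP hF hG y u)
  exact mul_le_mul_of_nonneg_left (hG.1 (by linarith)) (hF.nonneg u)

/-- left continuity from a lower approximation -/
lemma leftCont_of_approx {F : ℝ → ℝ} (hm : Monotone F) {x : ℝ}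
    (h : ∀ c < F x, ∃ y < x, c < F y) : Tendsto F (nhdsWithin x (Set.Iio x)) (nhds (F x)) := by
  rw [tendsto_order]
  constructor
  · intro c hc
    obtain ⟨y, hy, hcy⟩ := h c hc
    filter_upwards [Ioo_mem_nhdsLT hy] with z hz
    exact hcy.trans_le (hm hz.1.le)
  · intro c hc
    filter_upwards [self_mem_nhdsWithin] with z hz
    exact (hm (le_of_lt hz)).trans_lt hc

lemma DDF.approx {F : ℝ → ℝ} (h : DDF F) {x c : ℝ} (hc : c < F x) : ∃ y < x, c < F y := by
  have h1 := (tendsto_order.1 (h.2.2.2 x)).1 c hc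
  obtain ⟨y, hy, hy'⟩ := (h1.and self_mem_nhdsWithin).exists
  exact ⟨y, hy', hy⟩

lemma tauP_ddf {F G : ℝ → ℝ} (hF : DDF F) (hG : DDF G) : DDF (tauP F G) := by
  refine ⟨tauP_mono hF hG, ?_, fun x => tauP_le fun u => tauP_term_le_one hF hG u _, ?_⟩
  · intro x hx
    refine le_antisymm (tauP_le fun u => ?_) (tauP_nonneg hF hG x)
    rcases le_total u 0 with hu | hu
    · simp [hF.2.1 u hu]
    · simp [hG.2.1 (x - u) (by linarith)]
  · intro x
    refine leftCont_of_approx (tauP_mono hF hG) fun c hc => ?_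
    obtain ⟨u, hu⟩ := exists_lt_of_lt_tauP hc
    rcases (hF.nonneg u).eq_or_lt with h0 | h0
    · refine ⟨x - 1, by linarith, lt_of_lt_of_le ?_ (tauP_nonneg hF hG _)⟩
      rw [← h0] at hu; simpa using hu
    · have : c / F u < G (x - u) := by rw [div_lt_iff₀ h0]; linarith
      obtain ⟨y, hy, hy'⟩ := hG.approx this
      refine ⟨y + u, by linarith, lt_of_lt_of_le ?_ (le_tauP hF hG _ u)⟩
      rw [div_lt_iff₀ h0] at hy'
      simp only [add_sub_cancel_right]; linarith

lemma tauP_comm_le {F G : ℝ → ℝ} (hF : DDF F) (hG : DDF G) : tauP F G ≤ tauP G F := by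
  intro x
  refine tauP_le fun u => ?_
  have := le_tauP hG hF x (x - u)
  simp only [sub_sub_cancel] at this
  linarith

lemma tauP_comm {F G : ℝ → ℝ} (hF : DDF F) (hG : DDF G) : tauP F G = tauP G F :=
  le_antisymm (tauP_comm_le hF hG) (tauP_comm_le hG hF)

lemma tauP_assoc_le {F G H : ℝ → ℝ} (hF : DDF F) (hG : DDF G) (hH : DDF H) :
    tauP (tauP F G) H ≤ tauP F (tauP G H) := by
  intro x
  refine tauP_le fun u => ?_
  rw [tauP, Real.iSup_mul_of_nonneg (hH.nonneg _)]
  refine ciSup_le fun w => le_trans ?_ (le_tauP hF (tauP_ddf hG hH) x w)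
  rw [mul_assoc]
  refine mul_le_mul_of_nonneg_left ?_ (hF.nonneg w)
  have := le_tauP hG hH (x - w) (u - w)
  simpa using this

lemma tauP_mono_left {F G H : ℝ → ℝ} (hG : DDF G) (hH : DDF H)
    (h : F ≤ G) : tauP F H ≤ tauP G H := fun x =>
  tauP_le fun u => (mul_le_mul_of_nonneg_right (h u) (hH.nonneg _)).trans (le_tauP hG hH x u)

lemma eps0_ddf : DDF eps0 := by
  have hm : Monotone eps0 := by
    intro x y hxy
    unfold eps0
    split_ifs <;> linarith
  refine ⟨hm, fun x hx => by simp [eps0, hx], fun x => by unfold eps0; split_ifs <;> norm_num,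
    fun x => leftCont_of_approx hm fun c hc => ?_⟩
  rcases le_or_gt x 0 with hx | hx
  · refine ⟨x - 1, by linarith, ?_⟩
    have : x - 1 ≤ 0 := by linarith
    simp only [eps0, hx, this, if_true] at *; exact hc
  · refine ⟨x / 2, by linarith, ?_⟩
    have : ¬ x / 2 ≤ 0 := by linarith
    simp only [eps0, not_le.2 hx, this, if_false] at *; exact hc

lemma tauP_unit {F : ℝ → ℝ} (hF : DDF F) : tauP F eps0 = F := by
  funext x
  apply le_antisymm
  · refine tauP_le fun u => ?_
    unfold eps0
    split_ifs with h
    · simpa using hF.nonneg x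
    · simpa using hF.1 (by linarith : u ≤ x)
  · refine le_of_forall_lt fun c hc => ?_
    obtain ⟨y, hy, hcy⟩ := hF.approx hc
    refine lt_of_lt_of_le hcy ?_
    have := le_tauP hF eps0_ddf x y
    have h2 : ¬ x - y ≤ 0 := by linarith
    simpa [eps0, h2] using this

lemma exists_contAt {F : ℝ → ℝ} (hF : Monotone F) {a b : ℝ} (hab : a < b) :
    ∃ y, a < y ∧ y < b ∧ ContinuousAt F y := by
  have hd := hF.countable_not_continuousAt.dense_compl ℝ
  obtain ⟨y, hy, hy'⟩ := hd.exists_between hab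
  exact ⟨y, hy'.1, hy'.2, by simpa using hy⟩

lemma tauP_weak {Fn : ℕ → ℝ → ℝ} {F G : ℝ → ℝ} (hFn : ∀ n, DDF (Fn n)) (hF : DDF F)
    (hG : DDF G) (hw : WeakConv Fn F) : WeakConv (fun n => tauP (Fn n) G) (tauP F G) := by
  intro x hx
  rw [tendsto_order]
  constructor
  · intro c hc
    obtain ⟨u, hu⟩ := exists_lt_of_lt_tauP hc
    rcases (hG.nonneg (x - u)).eq_or_lt with h0 | h0
    · rw [← h0] at hu
      exact Eventually.of_forall fun n =>
        lt_of_lt_of_le (by simpa using hu) (tauP_nonneg (hFn n) hG x)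
    · have : c / G (x - u) < F u := by rwa [div_lt_iff₀ h0]
      obtain ⟨y, hy, hcy⟩ := hF.approx this
      obtain ⟨z, hz1, hz2, hz⟩ := exists_contAt hF.1 hy
      have h1 := (tendsto_order.1 (hw z hz)).1 _ (hcy.trans_le (hF.1 hz1.le))
      filter_upwards [h1] with n hn
      rw [div_lt_iff₀ h0] at hn
      refine hn.trans_le (le_trans ?_ (le_tauP (hFn n) hG x z))
      exact mul_le_mul_of_nonneg_left (hG.1 (by linarith)) ((hFn n).nonneg z)
  · intro c hc
    obtain ⟨c', hc', hcc'⟩ := exists_between hc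
    have h1 := (tendsto_order.1 hx).2 c' hc'
    obtain ⟨y, hxy, hy⟩ : ∃ y, x < y ∧ tauP F G y < c' := by
      have := (h1.filter_mono (nhdsWithin_le_nhds (s := Set.Ioi x))).and self_mem_nhdsWithin
      obtain ⟨y, hy, hy'⟩ := this.exists
      exact ⟨y, hy', hy⟩
    have hc0 : 0 ≤ c' := (tauP_nonneg hF hG y).trans hy.le
    have key : ∀ᶠ n in atTop, ∀ u ∈ Set.Icc 0 x, Fn n u * G (x - u) ≤ c' := by
      have hloc : ∀ u : ℝ, ∃ s ∈ 𝓝 u, ∀ᶠ n in atTop, ∀ w ∈ s, Fn n w * G (x - w) ≤ c' := by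
        intro u
        set δ := (y - x) / 2 with hδ
        have hδ0 : 0 < δ := by linarith
        obtain ⟨b, hb1, hb2, hb⟩ := exists_contAt hF.1 (show u < u + δ by linarith)
        refine ⟨Set.Ioo (u - δ) b, Ioo_mem_nhds (by linarith) hb1, ?_⟩
        have ht : Tendsto (fun n => Fn n b * G (x - u + δ)) atTop (𝓝 (F b * G (x - u + δ))) :=
          (hw b hb).mul_const _
        have hlt : F b * G (x - u + δ) < c' := by
          refine lt_of_le_of_lt ?_ hy
          refine le_trans ?_ (le_tauP hF hG y b)
          exact mul_le_mul_of_nonneg_left (hG.1 (by linarith)) (hF.nonneg b)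
        filter_upwards [(tendsto_order.1 ht).2 _ hlt] with n hn w hw'
        refine le_trans ?_ hn.le
        exact mul_le_mul ((hFn n).1 hw'.2.le) (hG.1 (by linarith [hw'.1])) (hG.nonneg _)
          ((hFn n).nonneg _)
      refine isCompact_Icc.induction_on (p := fun s => ∀ᶠ n in atTop, ∀ u ∈ s,
        Fn n u * G (x - u) ≤ c') ?_ ?_ ?_ ?_
      · simp
      · intro s t hst ht
        filter_upwards [ht] with n hn u hu using hn u (hst hu)
      · intro s t hs ht
        filter_upwards [hs, ht] with n h1 h2 u hu
        exact hu.elim (h1 u) (h2 u)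
      · intro u _
        obtain ⟨s, hs, h⟩ := hloc u
        exact ⟨s, mem_nhdsWithin_of_mem_nhds hs, h⟩
    filter_upwards [key] with n hn
    refine lt_of_le_of_lt (tauP_le fun u => ?_) hcc'
    by_cases hu : u ∈ Set.Icc 0 x
    · exact hn u hu
    · rcases lt_or_ge u 0 with h | h
      · simpa [(hFn n).2.1 u h.le] using hc0
      · have : x < u := by
          by_contra hcon
          exact hu ⟨h, not_lt.1 hcon⟩
        simpa [hG.2.1 (x - u) (by linarith)] using hc0

lemma tauP_triangle : IsTriangleFunction tauP := by
  refine ⟨fun F G hF hG => tauP_ddf hF hG, fun F G H hF hG hH => ?_,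
    fun F G hF hG => tauP_comm hF hG, fun F G H _ hG hH h => tauP_mono_left hG hH h,
    fun F hF => tauP_unit hF, fun Fn F G hFn hF hG hw => tauP_weak hFn hF hG hw⟩
  refine le_antisymm (tauP_assoc_le hF hG hH) ?_
  have := tauP_assoc_le hH hG hF
  rwa [tauP_comm (tauP_ddf hH hG) hF, tauP_comm hH hG, tauP_comm hH (tauP_ddf hG hF),
    tauP_comm hG hF] at this

lemma tauP_arch : IsArchimedean tauP := by
  intro F hF hid
  by_contra! hcon
  obtain ⟨h0, hinf⟩ := hcon
  have : ∃ x0, 0 < x0 ∧ F x0 < 1 := by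
    by_contra! hall
    apply h0
    funext x
    unfold eps0
    split_ifs with h
    · exact hF.2.1 x h
    · exact le_antisymm (hF.2.2.1 x) (hall x (by linarith))
  obtain ⟨x0, hx0, hlt⟩ := this
  have hz : F x0 = 0 := by
    have : F x0 ≤ F x0 * F x0 := by
      conv_lhs => rw [← hid]
      refine tauP_le fun u => ?_
      rcases le_total u 0 with hu | hu
      · rw [hF.2.1 u hu, zero_mul]; exact mul_self_nonneg _
      · rcases le_total x0 u with hu' | hu'
        · rw [hF.2.1 (x0 - u) (by linarith), mul_zero]; exact mul_self_nonneg _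
        · exact mul_le_mul (hF.1 hu') (hF.1 (by linarith)) (hF.nonneg _) (hF.nonneg _)
    nlinarith [hF.nonneg x0]
  have hk : ∀ k : ℕ, F (2 ^ k * x0) = 0 := by
    intro k
    induction k with
    | zero => simpa using hz
    | succ k ih =>
      refine le_antisymm ?_ (hF.nonneg _)
      rw [← hid]
      refine tauP_le fun u => ?_
      rcases le_total u (2 ^ k * x0) with hu | hu
      · have : F u = 0 := le_antisymm (ih ▸ hF.1 hu) (hF.nonneg _)
        simp [this]
      · have : F (2 ^ (k+1) * x0 - u) = 0 :=
          le_antisymm (ih ▸ hF.1 (by rw [pow_succ]; linarith)) (hF.nonneg _)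
        simp [this]
  apply hinf
  funext x
  obtain ⟨k, hk'⟩ := pow_unbounded_of_one_lt (x / x0) (one_lt_two)
  rw [div_lt_iff₀ hx0] at hk'
  change F x = 0
  exact le_antisymm (hk k ▸ hF.1 hk'.le) (hF.nonneg _)

/-- the one-parameter family -/
def fam (s : ℝ) : ℝ → ℝ := fun x => if x ≤ 0 then 0 else min 1 (Real.exp (x - s))

lemma fam_ddf (s : ℝ) : DDF (fam s) := by
  have hm : Monotone (fam s) := by
    intro x y hxy
    unfold fam
    split_ifs with h1 h2
    · rfl
    · positivity
    · linarith
    · exact min_le_min le_rfl (Real.exp_le_exp.2 (by linarith))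
  refine ⟨hm, fun x hx => by simp [fam, hx], fun x => ?_, fun x => ?_⟩
  · unfold fam
    split_ifs
    · norm_num
    · exact min_le_left _ _
  · rcases le_or_gt x 0 with hx | hx
    · refine leftCont_of_approx hm fun c hc => ⟨x - 1, by linarith, ?_⟩
      have : x - 1 ≤ 0 := by linarith
      simp only [fam, hx, this, if_true] at *; exact hc
    · have hc : ContinuousAt (fam s) x := by
        have h1 : ContinuousAt (fun x => min 1 (Real.exp (x - s))) x := by fun_prop
        refine h1.congr ?_
        filter_upwards [lt_mem_nhds hx] with y hy
        simp [fam, not_le.2 hy]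
      exact hc.tendsto.mono_left nhdsWithin_le_nhds

lemma fam_anti {s t : ℝ} (h : s ≤ t) : fam t ≤ fam s := by
  intro x
  unfold fam
  split_ifs
  · rfl
  · exact min_le_min le_rfl (Real.exp_le_exp.2 (by linarith))

lemma fam_zero : fam 0 = eps0 := by
  funext x
  unfold fam eps0
  split_ifs with h
  · rfl
  · rw [min_eq_left]
    rw [Real.one_le_exp_iff]; linarith

lemma fam_ne {s : ℝ} (hs : 0 < s) : fam s ≠ eps0 := by
  intro h
  have := congrFun h (s / 2)
  have h2 : ¬ s / 2 ≤ 0 := by linarith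
  simp only [fam, eps0, h2, if_false] at this
  have h3 : Real.exp (s / 2 - s) < 1 := by rw [Real.exp_lt_one_iff]; linarith
  rw [min_eq_right h3.le] at this
  linarith

lemma fam_ne_inf (s : ℝ) : fam s ≠ epsInf := by
  intro h
  have := congrFun h 1
  have h2 : ¬ (1:ℝ) ≤ 0 := by norm_num
  simp only [fam, epsInf, h2, if_false] at this
  have : 0 < min 1 (Real.exp (1 - s)) := by positivity
  linarith

lemma tauP_fam_le (s t : ℝ) : tauP (fam s) (fam t) ≤ fam (s + t) := by
  intro x
  refine tauP_le fun u => ?_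
  rcases le_or_gt u 0 with hu | hu
  · simpa [fam, hu] using (fam_ddf (s+t)).nonneg x
  rcases le_or_gt (x - u) 0 with hv | hv
  · rw [(fam_ddf t).2.1 _ hv]
    simpa using (fam_ddf (s+t)).nonneg x
  · have hx : ¬ x ≤ 0 := by linarith
    have hu' := not_le.2 hu
    have hv' := not_le.2 hv
    simp only [fam, hx, hu', hv', if_false]
    refine le_min ?_ ?_
    · exact mul_le_one₀ (min_le_left _ _) (by positivity) (min_le_left _ _)
    · calc _ ≤ Real.exp (u - s) * Real.exp (x - u - t) :=
            mul_le_mul (min_le_right _ _) (min_le_right _ _) (by positivity) (by positivity)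
        _ = _ := by rw [← Real.exp_add]; congr 1; ring

lemma fam_le_tauP {s t : ℝ} (hs : 0 ≤ s) (ht : 0 ≤ t) : fam (s + t) ≤ tauP (fam s) (fam t) := by
  rcases hs.eq_or_lt with rfl | hs
  · rw [fam_zero, tauP_comm eps0_ddf (fam_ddf t), tauP_unit (fam_ddf t), zero_add]
  rcases ht.eq_or_lt with rfl | ht
  · rw [fam_zero, tauP_unit (fam_ddf s), add_zero]
  intro x
  rcases le_or_gt x 0 with hx | hx
  · rw [(fam_ddf _).2.1 x hx]; exact tauP_nonneg (fam_ddf s) (fam_ddf t) x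
  refine le_trans ?_ (le_tauP (fam_ddf s) (fam_ddf t) x (x * s / (s + t)))
  have hu : 0 < x * s / (s + t) := by positivity
  have hve : x - x * s / (s + t) = x * t / (s + t) := by field_simp; ring
  have hv : 0 < x * t / (s + t) := by positivity
  rw [hve]
  simp only [fam, not_le.2 hx, not_le.2 hu, not_le.2 hv, if_false]
  rcases le_total x (s + t) with h | h
  · have e1 : x * s / (s + t) ≤ s := by rw [div_le_iff₀ (by positivity)]; nlinarith
    have e2 : x * t / (s + t) ≤ t := by rw [div_le_iff₀ (by positivity)]; nlinarith
    rw [min_eq_right (a := 1) (b := Real.exp (x * s / (s + t) - s)) (by rw [Real.exp_le_one_iff]; linarith),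
      min_eq_right (a := 1) (b := Real.exp (x * t / (s + t) - t)) (by rw [Real.exp_le_one_iff]; linarith),
      ← Real.exp_add]
    refine (min_le_right _ _).trans (Real.exp_le_exp.2 ?_)
    rw [← hve]; linarith
  · have e1 : s ≤ x * s / (s + t) := by rw [le_div_iff₀ (by positivity)]; nlinarith
    have e2 : t ≤ x * t / (s + t) := by rw [le_div_iff₀ (by positivity)]; nlinarith
    rw [min_eq_left (a := 1) (b := Real.exp (x * s / (s + t) - s)) (by rw [Real.one_le_exp_iff]; linarith),
      min_eq_left (a := 1) (b := Real.exp (x * t / (s + t) - t)) (by rw [Real.one_le_exp_iff]; linarith)]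
    refine (min_le_left _ _).trans (by norm_num)

/-- reparametrization of a distribution function -/
def cj (φ ψ : ℝ ≃o ℝ) (F : ℝ → ℝ) : ℝ → ℝ := fun x => ψ (F (φ x))

lemma cj_symm_cj (φ ψ : ℝ ≃o ℝ) (F : ℝ → ℝ) : cj φ.symm ψ.symm (cj φ ψ F) = F := by
  funext x; simp [cj]

lemma cj_cj_symm (φ ψ : ℝ ≃o ℝ) (F : ℝ → ℝ) : cj φ ψ (cj φ.symm ψ.symm F) = F := by
  funext x; simp [cj]

lemma symm_fix {φ : ℝ ≃o ℝ} {a : ℝ} (h : φ a = a) : φ.symm a = a := by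
  rw [OrderIso.symm_apply_eq, h]

lemma cj_mono (φ ψ : ℝ ≃o ℝ) {F G : ℝ → ℝ} (h : F ≤ G) : cj φ ψ F ≤ cj φ ψ G :=
  fun x => ψ.monotone (h (φ x))

lemma cj_ddf {φ ψ : ℝ ≃o ℝ} (h0 : φ 0 = 0) (k0 : ψ 0 = 0) (k1 : ψ 1 = 1) {F : ℝ → ℝ}
    (hF : DDF F) : DDF (cj φ ψ F) := by
  have hm : Monotone (cj φ ψ F) := fun x y hxy => ψ.monotone (hF.1 (φ.monotone hxy))
  refine ⟨hm, fun x hx => ?_, fun x => ?_, fun x => leftCont_of_approx hm fun c hc => ?_⟩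
  · have : φ x ≤ 0 := h0 ▸ φ.monotone hx
    simp [cj, hF.2.1 _ this, k0]
  · rw [← k1]; exact ψ.monotone (hF.2.2.1 _)
  · have : ψ.symm c < F (φ x) := by
      rw [OrderIso.symm_apply_lt]; exact hc
    obtain ⟨y, hy, hcy⟩ := hF.approx this
    refine ⟨φ.symm y, by rwa [OrderIso.symm_apply_lt], ?_⟩
    rw [OrderIso.symm_apply_lt] at hcy
    simpa [cj] using hcy

lemma cj_eps0 {φ ψ : ℝ ≃o ℝ} (h0 : φ 0 = 0) (k0 : ψ 0 = 0) (k1 : ψ 1 = 1) :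
    cj φ ψ eps0 = eps0 := by
  funext x
  have : φ x ≤ 0 ↔ x ≤ 0 := by
    conv_lhs => rw [← h0]
    exact φ.le_iff_le
  unfold cj eps0
  simp only [this]
  split_ifs
  · exact k0
  · exact k1

lemma cj_epsInf {φ ψ : ℝ ≃o ℝ} (k0 : ψ 0 = 0) : cj φ ψ epsInf = epsInf := by
  funext x; simp [cj, epsInf, k0]

lemma cj_weak (φ ψ : ℝ ≃o ℝ) {Fn : ℕ → ℝ → ℝ} {F : ℝ → ℝ} (h : WeakConv Fn F) :
    WeakConv (fun n => cj φ ψ (Fn n)) (cj φ ψ F) := by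
  intro x hx
  have hc : ContinuousAt F (φ x) := by
    have e : F = ψ.symm ∘ (cj φ ψ F) ∘ φ.symm := (cj_symm_cj φ ψ F).symm
    rw [e]
    refine ψ.symm.continuous.continuousAt.comp (ContinuousAt.comp ?_ φ.symm.continuous.continuousAt)
    simpa using hx
  exact (ψ.continuous.tendsto _).comp (h _ hc)

/-- transported triangle function -/
def tauC (φ ψ : ℝ ≃o ℝ) (F G : ℝ → ℝ) : ℝ → ℝ :=
  cj φ ψ (tauP (cj φ.symm ψ.symm F) (cj φ.symm ψ.symm G))

lemma tauC_triangle {φ ψ : ℝ ≃o ℝ} (h0 : φ 0 = 0) (k0 : ψ 0 = 0) (k1 : ψ 1 = 1) :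
    IsTriangleFunction (tauC φ ψ) := by
  obtain ⟨t1, t2, t3, t4, t5, t6⟩ := tauP_triangle
  have D : ∀ {F}, DDF F → DDF (cj φ ψ F) := fun h => cj_ddf h0 k0 k1 h
  have D' : ∀ {F}, DDF F → DDF (cj φ.symm ψ.symm F) :=
    fun h => cj_ddf (symm_fix h0) (symm_fix k0) (symm_fix k1) h
  refine ⟨fun F G hF hG => D (t1 _ _ (D' hF) (D' hG)), fun F G H hF hG hH => ?_,
    fun F G hF hG => ?_, fun F G H hF hG hH h => ?_, fun F hF => ?_,
    fun Fn F G hFn hF hG hw => ?_⟩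
  · simp only [tauC, cj_symm_cj]
    rw [t2 _ _ _ (D' hF) (D' hG) (D' hH)]
  · simp only [tauC]
    rw [t3 _ _ (D' hF) (D' hG)]
  · exact cj_mono _ _ (t4 _ _ _ (D' hF) (D' hG) (D' hH) (cj_mono _ _ h))
  · simp only [tauC]
    rw [cj_eps0 (symm_fix h0) (symm_fix k0) (symm_fix k1), t5 _ (D' hF), cj_cj_symm]
  · exact cj_weak _ _ (t6 _ _ _ (fun n => D' (hFn n)) (D' hF) (D' hG) (cj_weak _ _ hw))

lemma tauC_arch {φ ψ : ℝ ≃o ℝ} (h0 : φ 0 = 0) (k0 : ψ 0 = 0) (k1 : ψ 1 = 1) :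
    IsArchimedean (tauC φ ψ) := by
  intro F hF hid
  have := tauP_arch (cj φ.symm ψ.symm F)
    (cj_ddf (symm_fix h0) (symm_fix k0) (symm_fix k1) hF) (by
      conv_rhs => rw [← hid]
      rw [tauC, cj_symm_cj])
  rcases this with h | h
  · left
    rw [← cj_cj_symm φ ψ F, h, cj_eps0 h0 k0 k1]
  · right
    rw [← cj_cj_symm φ ψ F, h, cj_epsInf k0]

lemma cj_pn {φ ψ : ℝ ≃o ℝ} (h0 : φ 0 = 0) (k0 : ψ 0 = 0) (k1 : ψ 1 = 1) :
    IsPNSpace ℝ (fun r => cj φ ψ (fam |r|)) (tauC φ ψ) (tauC φ ψ) where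
  ddf r := cj_ddf h0 k0 k1 (fam_ddf _)
  tri := tauC_triangle h0 k0 k1
  tris := tauC_triangle h0 k0 k1
  tle F G _ _ := le_rfl
  n1 r := by
    constructor
    · intro h
      by_contra hr
      apply fam_ne (abs_pos.2 hr)
      rw [← cj_symm_cj φ ψ (fam |r|), h, cj_eps0 (symm_fix h0) (symm_fix k0) (symm_fix k1)]
    · rintro rfl
      simp only [abs_zero, fam_zero]
      exact cj_eps0 h0 k0 k1
  n2 r := by simp only [abs_neg]
  n3 r s := by
    simp only [tauC, cj_symm_cj]
    exact cj_mono _ _ ((tauP_fam_le _ _).trans (fam_anti (abs_add_le r s)))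
  n4 r l h0 h1 := by
    simp only [tauC, cj_symm_cj]
    refine cj_mono _ _ ?_
    have e : |r| = |l • r| + |(1 - l) • r| := by
      rw [smul_eq_mul, smul_eq_mul, abs_mul, abs_mul, abs_of_nonneg h0,
        abs_of_nonneg (sub_nonneg.2 h1)]
      ring
    rw [e]
    exact fam_le_tauP (abs_nonneg _) (abs_nonneg _)

lemma cj_fam_ne_inf {φ ψ : ℝ ≃o ℝ} (k0 : ψ 0 = 0) (s : ℝ) : cj φ ψ (fam s) ≠ epsInf := by
  intro h
  apply fam_ne_inf s
  rw [← cj_symm_cj φ ψ (fam s), h, cj_epsInf (symm_fix k0)]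

/-- the companion on the value axis: `y ↦ exp (-φ (-log y))` for positive `y` -/
def psiFun (φ : ℝ ≃o ℝ) (y : ℝ) : ℝ := if y ≤ 0 then y else Real.exp (-φ (-Real.log y))

lemma psiFun_inv (φ : ℝ ≃o ℝ) (y : ℝ) : psiFun φ.symm (psiFun φ y) = y := by
  unfold psiFun
  by_cases h : y ≤ 0
  · simp [h]
  · have h2 : ¬ Real.exp (-φ (-Real.log y)) ≤ 0 := not_le.2 (Real.exp_pos _)
    simp only [h, h2, if_false, Real.log_exp, neg_neg, OrderIso.symm_apply_apply]
    exact Real.exp_log (not_le.1 h)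

lemma psiFun_mono (φ : ℝ ≃o ℝ) : StrictMono (psiFun φ) := by
  intro x y hxy
  unfold psiFun
  split_ifs with h1 h2 h2
  · exact hxy
  · exact h1.trans_lt (Real.exp_pos _)
  · linarith
  · refine Real.exp_lt_exp.2 (neg_lt_neg (φ.strictMono (neg_lt_neg ?_)))
    exact Real.log_lt_log (not_le.1 h1) hxy

def psi (φ : ℝ ≃o ℝ) : ℝ ≃o ℝ where
  toFun := psiFun φ
  invFun := psiFun φ.symm
  left_inv := psiFun_inv φ
  right_inv := psiFun_inv φ.symm
  map_rel_iff' := (psiFun_mono φ).le_iff_le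

lemma psi_zero (φ : ℝ ≃o ℝ) : psi φ 0 = 0 := by
  change psiFun φ 0 = 0
  simp [psiFun]

lemma psi_one {φ : ℝ ≃o ℝ} (h : φ 0 = 0) : psi φ 1 = 1 := by
  change psiFun φ 1 = 1
  simp [psiFun, h]

lemma psi_exp (φ : ℝ ≃o ℝ) (t : ℝ) : psi φ (Real.exp (-t)) = Real.exp (-φ t) := by
  change psiFun φ _ = _
  simp [psiFun, not_le.2 (Real.exp_pos (-t))]

/-- a monotone function that vanishes on the negatives and tends to `0` at `0+` has
a continuous strictly increasing majorant which is an order isomorphism -/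
lemma exists_majorant {w : ℝ → ℝ} (hw : Monotone w) (hw0 : ∀ s ≤ 0, w s = 0)
    (hlim : ∀ e > 0, ∃ s > 0, w s < e) :
    ∃ φ : ℝ ≃o ℝ, φ 0 = 0 ∧ ∀ s > 0, w s < φ s := by
  have hint : ∀ a b, IntervalIntegrable w MeasureTheory.volume a b :=
    fun a b => hw.intervalIntegrable
  set A : ℝ → ℝ := fun s => ∫ u in (1:ℝ)..2, w (s * u) with hA
  have hintA : ∀ s, 0 ≤ s → IntervalIntegrable (fun u => w (s * u)) MeasureTheory.volume 1 2 :=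
    fun s hs => Monotone.intervalIntegrable
      (fun a b hab => hw (mul_le_mul_of_nonneg_left hab hs))
  have hA0 : ∀ s ≤ 0, A s = 0 := by
    intro s hs
    have : Set.EqOn (fun u => w (s * u)) (fun _ => 0) (Set.uIcc 1 2) := by
      intro u hu
      rw [Set.uIcc_of_le (by norm_num)] at hu
      exact hw0 _ (mul_nonpos_of_nonpos_of_nonneg hs (by linarith [hu.1]))
    simp only [hA]
    rw [intervalIntegral.integral_congr this]; simp
  have hle : ∀ s, 0 ≤ s → w s ≤ A s := by
    intro s hs
    have : ∫ u in (1:ℝ)..2, w s ≤ A s := by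
      refine intervalIntegral.integral_mono_on (by norm_num) (by simp) (hintA s hs) ?_
      intro u hu
      exact hw (by nlinarith [hu.1])
    simpa [show (2:ℝ) - 1 = 1 by norm_num] using this
  have hge : ∀ s, 0 ≤ s → A s ≤ w (2 * s) := by
    intro s hs
    have : A s ≤ ∫ u in (1:ℝ)..2, w (2 * s) := by
      refine intervalIntegral.integral_mono_on (by norm_num) (hintA s hs) (by simp) ?_
      intro u hu
      exact hw (by nlinarith [hu.2])
    simpa [show (2:ℝ) - 1 = 1 by norm_num] using this
  have hwn : ∀ s, 0 ≤ w s := by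
    intro s
    rcases le_total s 0 with h | h
    · exact (hw0 s h).ge
    · exact hw0 0 le_rfl ▸ hw h
  have hAn : ∀ s, 0 ≤ A s := by
    intro s
    rcases le_total s 0 with h | h
    · exact (hA0 s h).ge
    · exact (hwn s).trans (hle s h)
  have hAm : Monotone A := by
    intro s t hst
    rcases le_total s 0 with h | h
    · rw [hA0 s h]; exact hAn t
    · refine intervalIntegral.integral_mono_on (by norm_num) (hintA s h)
        (hintA t (h.trans hst)) ?_
      intro u hu
      exact hw (by nlinarith [hu.1])
  have hAc : Continuous A := by
    rw [continuous_iff_continuousAt]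
    intro s
    rcases lt_trichotomy s 0 with h | h | h
    · refine (continuousAt_const (y := (0:ℝ))).congr ?_
      filter_upwards [gt_mem_nhds h] with y hy
      exact (hA0 y hy.le).symm
    · subst h
      unfold ContinuousAt
      rw [hA0 0 le_rfl, tendsto_order]
      constructor
      · intro c hc
        exact Eventually.of_forall fun y => hc.trans_le (hAn y)
      · intro c hc
        obtain ⟨s, hs, hs'⟩ := hlim c hc
        filter_upwards [gt_mem_nhds (show (0:ℝ) < s / 2 by linarith)] with y hy
        have h1 : A y ≤ A (s / 2) := hAm hy.le
        have h2 := hge (s / 2) (by linarith)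
        rw [show 2 * (s / 2) = s by ring] at h2
        linarith
    · have hW := intervalIntegral.continuous_primitive hint 0
      have h1 : ContinuousAt (fun s : ℝ => s⁻¹ * ((∫ u in (0:ℝ)..(s * 2), w u)
          - ∫ u in (0:ℝ)..s, w u)) s := by
        refine (continuousAt_inv₀ h.ne').mul (ContinuousAt.sub ?_ hW.continuousAt)
        exact (hW.comp (continuous_id.mul continuous_const)).continuousAt
      refine h1.congr ?_
      filter_upwards [lt_mem_nhds h] with y hy
      simp only [hA]
      rw [intervalIntegral.integral_comp_mul_left _ hy.ne',
        intervalIntegral.integral_interval_sub_left (hint _ _) (hint _ _)]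
      simp
  have hsm : StrictMono (fun s => s + A s) := fun s t hst => add_lt_add_of_lt_of_le hst (hAm hst.le)
  have hsurj : Function.Surjective (fun s => s + A s) := by
    refine Continuous.surjective (by fun_prop) ?_ ?_
    · exact tendsto_atTop_mono (fun s => le_add_of_nonneg_right (hAn s)) tendsto_id
    · refine tendsto_id.congr' ?_
      filter_upwards [eventually_le_atBot 0] with s hs
      simp [hA0 s hs]
  refine ⟨hsm.orderIsoOfSurjective _ hsurj, ?_, ?_⟩
  · change 0 + A 0 = 0
    simp [hA0 0 le_rfl]
  · intro s hs
    change w s < s + A s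
    linarith [hle s hs.le]

lemma DDF.le_eps0 {F : ℝ → ℝ} (h : DDF F) : F ≤ eps0 := by
  intro x
  unfold eps0
  split_ifs with hx
  · exact (h.2.1 x hx).le
  · exact h.2.2.1 x

lemma tri_le_left {τ : (ℝ → ℝ) → (ℝ → ℝ) → (ℝ → ℝ)} (hτ : IsTriangleFunction τ)
    {F G : ℝ → ℝ} (hF : DDF F) (hG : DDF G) : τ F G ≤ F := by
  obtain ⟨t1, t2, t3, t4, t5, t6⟩ := hτ
  calc τ F G = τ G F := t3 _ _ hF hG
    _ ≤ τ eps0 F := t4 _ _ _ hG eps0_ddf hF hG.le_eps0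
    _ = τ F eps0 := t3 _ _ eps0_ddf hF
    _ = F := t5 _ hF

lemma tri_mono {τ : (ℝ → ℝ) → (ℝ → ℝ) → (ℝ → ℝ)} (hτ : IsTriangleFunction τ)
    {F G F' G' : ℝ → ℝ} (hF : DDF F) (hG : DDF G) (hF' : DDF F') (hG' : DDF G')
    (h1 : F ≤ F') (h2 : G ≤ G') : τ F G ≤ τ F' G' := by
  obtain ⟨t1, t2, t3, t4, t5, t6⟩ := hτ
  calc τ F G ≤ τ F' G := t4 _ _ _ hF hF' hG h1
    _ = τ G F' := t3 _ _ hF' hG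
    _ ≤ τ G' F' := t4 _ _ _ hG hG' hF' h2
    _ = τ F' G' := t3 _ _ hG' hF'

lemma weak_le {Fn Gn : ℕ → ℝ → ℝ} {F G : ℝ → ℝ} (hF : DDF F) (hG : DDF G)
    (h1 : WeakConv Fn F) (h2 : WeakConv Gn G) (hle : ∀ᶠ n in atTop, Fn n ≤ Gn n) : F ≤ G := by
  intro x
  refine le_of_forall_lt fun c hc => ?_
  obtain ⟨y, hy, hcy⟩ := hF.approx hc
  have hd := (hF.1.countable_not_continuousAt.union hG.1.countable_not_continuousAt).dense_compl ℝ
  obtain ⟨z, hz, hz'⟩ := hd.exists_between hy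
  simp only [Set.mem_compl_iff, Set.mem_union, Set.mem_ofPred_eq, not_or, not_not] at hz
  have : F z ≤ G z := le_of_tendsto_of_tendsto (h1 z hz.1) (h2 z hz.2)
    (hle.mono fun n hn => hn z)
  exact (hcy.trans_le (hF.1 hz'.1.le)).trans_le (this.trans (hG.1 hz'.2.le))

section PN

variable {V : Type} [AddCommGroup V] [Module ℝ V]
    {ν : V → ℝ → ℝ} {τ τs : (ℝ → ℝ) → (ℝ → ℝ) → (ℝ → ℝ)}

lemma pn_smul_le (h : IsPNSpace V ν τ τs) (p : V) {l : ℝ} (h0 : 0 ≤ l) (h1 : l ≤ 1) :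
    ν p ≤ ν (l • p) :=
  (h.n4 p l h0 h1).trans (tri_le_left h.tris (h.ddf _) (h.ddf _))

lemma pn_smul_anti (h : IsPNSpace V ν τ τs) (p : V) {s t : ℝ} (h0 : 0 ≤ s) (h1 : s ≤ t) :
    ν (t • p) ≤ ν (s • p) := by
  rcases (h0.trans h1).eq_or_lt with ht | ht
  · have : s = t := by linarith
    rw [this]
  · have := pn_smul_le h (t • p) (div_nonneg h0 ht.le) (div_le_one_of_le₀ h1 ht.le)
    rwa [smul_smul, div_mul_cancel₀ _ ht.ne'] at this

lemma pn_abs (h : IsPNSpace V ν τ τs) (p : V) (s : ℝ) : ν (s • p) = ν (|s| • p) := by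
  rcases abs_choice s with e | e
  · rw [e]
  · rw [e, neg_smul, h.n2]

lemma pn_half (h : IsPNSpace V ν τ τs) (p : V) (t : ℝ) :
    ν ((2 * t) • p) ≤ τs (ν (t • p)) (ν (t • p)) := by
  have := h.n4 ((2 * t) • p) (1 / 2) (by norm_num) (by norm_num)
  rw [smul_smul, smul_smul, show (1 / 2 : ℝ) * (2 * t) = t by ring,
    show (1 - 1 / 2 : ℝ) * (2 * t) = t by ring] at this
  exact this

/-- scaling down tends to `ε₀` -/
lemma pn_small (h : IsPNSpace V ν τ τs) (harch : IsArchimedean τs)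
    (hne : ∀ p : V, ν p ≠ epsInf) (p : V) {x c : ℝ} (hx : 0 < x) (hc : c < 1) :
    ∃ t : ℝ, 0 < t ∧ c < ν (t • p) x := by
  set F : ℝ → ℝ := fun x => ⨆ t : Set.Ioi (0:ℝ), ν ((t:ℝ) • p) x with hFdef
  have : Nonempty (Set.Ioi (0:ℝ)) := ⟨⟨1, Set.mem_Ioi.2 one_pos⟩⟩
  have hb : ∀ x, BddAbove (Set.range fun t : Set.Ioi (0:ℝ) => ν ((t:ℝ) • p) x) := fun x =>
    ⟨1, by rintro _ ⟨u, rfl⟩; exact (h.ddf _).2.2.1 x⟩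
  have hle : ∀ t : ℝ, 0 < t → ν (t • p) ≤ F := fun t ht x => le_ciSup (hb x) ⟨t, ht⟩
  have hm : Monotone F := fun x y hxy => ciSup_le fun t =>
    ((h.ddf _).1 hxy).trans (hle t t.2 y)
  have hF : DDF F := by
    refine ⟨hm, fun x hx => ?_, fun x => ciSup_le fun t => (h.ddf _).2.2.1 x,
      fun x => leftCont_of_approx hm fun c hc => ?_⟩
    · simp only [hFdef]
      simp [fun t : Set.Ioi (0:ℝ) => (h.ddf ((t:ℝ) • p)).2.1 x hx]
    · obtain ⟨t, ht⟩ := exists_lt_of_lt_ciSup hc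
      obtain ⟨y, hy, hcy⟩ := (h.ddf _).approx ht
      exact ⟨y, hy, hcy.trans_le (hle t t.2 y)⟩
  have hid : τs F F = F := by
    refine le_antisymm (tri_le_left h.tris hF hF) fun x => ciSup_le fun t => ?_
    have ht : (0:ℝ) < t / 2 := half_pos t.2
    have := pn_half h p (t / 2)
    rw [show 2 * ((t:ℝ) / 2) = t by ring] at this
    exact (this.trans (tri_mono h.tris (h.ddf _) (h.ddf _) hF hF (hle _ ht) (hle _ ht))) x
  rcases harch F hF hid with e | e
  · have : c < F x := by rw [e]; simpa [eps0, not_le.2 hx] using hc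
    obtain ⟨t, ht⟩ := exists_lt_of_lt_ciSup this
    exact ⟨t, t.2, ht⟩
  · exfalso
    apply hne p
    funext y
    refine le_antisymm ?_ ((h.ddf p).nonneg y)
    have := hle 1 one_pos y
    rw [one_smul, e] at this
    exact this

/-- scaling up tends to `ε∞` -/
lemma pn_large (h : IsPNSpace V ν τ τs) (harch : IsArchimedean τs)
    {p : V} (hp : p ≠ 0) {x c : ℝ} (hc : 0 < c) :
    ∃ k : ℕ, ν ((2:ℝ) ^ k • p) x < c := by
  by_contra! hcon
  set Fk : ℕ → ℝ → ℝ := fun k => ν ((2:ℝ) ^ k • p) with hFk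
  have hd : ∀ k, DDF (Fk k) := fun k => h.ddf _
  have hanti : ∀ {j k}, j ≤ k → Fk k ≤ Fk j := fun {j k} hjk =>
    pn_smul_anti h p (by positivity) (pow_le_pow_right₀ (by norm_num) hjk)
  set I : ℝ → ℝ := fun x => ⨅ k, Fk k x with hI
  have hbI : ∀ x, BddBelow (Set.range fun k => Fk k x) := fun x =>
    ⟨0, by rintro _ ⟨k, rfl⟩; exact (hd k).nonneg x⟩
  have hIle : ∀ k x, I x ≤ Fk k x := fun k x => ciInf_le (hbI x) k
  have hI0 : ∀ x, 0 ≤ I x := fun x => le_ciInf fun k => (hd k).nonneg x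
  have hI1 : ∀ x, I x ≤ 1 := fun x => (hIle 0 x).trans ((hd 0).2.2.1 x)
  have hIm : Monotone I := fun x y hxy => le_ciInf fun k => (hIle k x).trans ((hd k).1 hxy)
  have hIlim : ∀ x, Tendsto (fun k => Fk k x) atTop (𝓝 (I x)) := fun x =>
    tendsto_atTop_ciInf (fun j k hjk => hanti hjk x) (hbI x)
  set F : ℝ → ℝ := fun x => ⨆ y : Set.Iio x, I (y:ℝ) with hFdef
  have hbF : ∀ x : ℝ, BddAbove (Set.range fun y : Set.Iio x => I (y:ℝ)) := fun x =>
    ⟨1, by rintro _ ⟨y, rfl⟩; exact hI1 _⟩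
  have hNe : ∀ x : ℝ, Nonempty (Set.Iio x) := fun x => ⟨⟨x - 1, by simp⟩⟩
  have hIF : ∀ {y x}, y < x → I y ≤ F x := fun {y x} hyx => le_ciSup (hbF x) ⟨y, hyx⟩
  have hFI : ∀ x, F x ≤ I x := fun x => ciSup_le fun y => hIm (le_of_lt y.2)
  have hm : Monotone F := fun x y hxy => ciSup_le fun z => hIF (lt_of_lt_of_le z.2 hxy)
  have hFFk : ∀ k, F ≤ Fk k := fun k x => (hFI x).trans (hIle k x)
  have hF : DDF F := by
    refine ⟨hm, fun x hx => le_antisymm ?_ ?_, fun x => (hFI x).trans (hI1 x),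
      fun x => leftCont_of_approx hm fun c hc => ?_⟩
    · rw [← (hd 0).2.1 x hx]; exact hFFk 0 x
    · exact (hI0 (x - 1)).trans (hIF (by linarith))
    · obtain ⟨y, hy⟩ := exists_lt_of_lt_ciSup hc
      obtain ⟨z, hz1, hz2⟩ := exists_between (show (y:ℝ) < x from y.2)
      exact ⟨z, hz2, hy.trans_le (hIF hz1)⟩
  have hweak : WeakConv Fk F := by
    intro x hx
    have : I x = F x := by
      refine le_antisymm ?_ (hFI x)
      have h1 : Tendsto F (𝓝[>] x) (𝓝 (F x)) := hx.tendsto.mono_left nhdsWithin_le_nhds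
      refine ge_of_tendsto h1 ?_
      filter_upwards [self_mem_nhdsWithin] with y hy
      exact hIF hy
    rw [← this]; exact hIlim x
  obtain ⟨t1, t2, t3, t4, t5, t6⟩ := id h.tris
  have hstep : ∀ j, F ≤ τs F (Fk j) := by
    intro j
    refine weak_le (Fn := fun k => Fk (k + 1)) (Gn := fun k => τs (Fk k) (Fk j)) hF
      (t1 _ _ hF (hd j)) (fun x hx => (hweak x hx).comp (tendsto_add_atTop_nat 1))
      (t6 _ _ _ hd hF (hd j) hweak) ?_
    filter_upwards [eventually_ge_atTop j] with k hk
    have := pn_half h p (2 ^ k)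
    rw [show (2:ℝ) * 2 ^ k = 2 ^ (k + 1) by ring] at this
    exact this.trans (tri_mono h.tris (hd k) (hd k) (hd k) (hd j) le_rfl (hanti hk))
  have hid : τs F F = F := by
    refine le_antisymm (tri_le_left h.tris hF hF) ?_
    refine weak_le (Fn := fun _ => F) (Gn := fun k => τs (Fk k) F) hF (t1 _ _ hF hF)
      (fun x _ => tendsto_const_nhds) (t6 _ _ _ hd hF hF hweak) ?_
    refine Eventually.of_forall fun k => ?_
    rw [t3 _ _ (hd k) hF]
    exact hstep k
  rcases harch F hF hid with e | e
  · apply hp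
    rw [← h.n1]
    refine le_antisymm (h.ddf p).le_eps0 ?_
    have := hFFk 0
    simpa [hFk, e] using this
  · have h1 : c ≤ I x := le_ciInf hcon
    have h2 : I x ≤ F (x + 1) := hIF (by linarith)
    rw [e] at h2
    have : epsInf (x + 1) = 0 := rfl
    linarith

/-- strongly null sequences -/
def SNull (ν : V → ℝ → ℝ) (q : ℕ → V) : Prop :=
  ∀ x > 0, ∀ c < 1, ∀ᶠ k in atTop, c < ν (q k) x

lemma SNull.weak (h : IsPNSpace V ν τ τs) {q : ℕ → V} (hq : SNull ν q) :
    WeakConv (fun k => ν (q k)) eps0 := by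
  intro x _
  rcases le_or_gt x 0 with hx | hx
  · simp [eps0, hx, fun k => (h.ddf (q k)).2.1 x hx]
  · rw [show eps0 x = 1 by simp [eps0, not_le.2 hx], tendsto_order]
    exact ⟨fun c hc => hq x hx c hc,
      fun c hc => Eventually.of_forall fun k => ((h.ddf (q k)).2.2.1 x).trans_lt hc⟩

def stp (a b : ℝ) : ℝ → ℝ := fun x => if x ≤ b then 0 else a

lemma stp_ddf {a b : ℝ} (ha : 0 ≤ a) (ha1 : a ≤ 1) (hb : 0 ≤ b) : DDF (stp a b) := by
  have hm : Monotone (stp a b) := by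
    intro x y hxy
    unfold stp
    split_ifs <;> linarith
  refine ⟨hm, fun x hx => by simp [stp, hx.trans hb], fun x => by unfold stp; split_ifs <;> linarith,
    fun x => leftCont_of_approx hm fun c hc => ?_⟩
  rcases le_or_gt x b with hx | hx
  · refine ⟨x - 1, by linarith, ?_⟩
    have : x - 1 ≤ b := by linarith
    simp only [stp, hx, this, if_true] at *; exact hc
  · obtain ⟨y, hy1, hy2⟩ := exists_between hx
    refine ⟨y, hy2, ?_⟩
    simp only [stp, not_le.2 hx, not_le.2 hy1, if_false] at *; exact hc

lemma pn_perturb (h : IsPNSpace V ν τ τs) {q r : ℕ → V} (hr : SNull ν r) {a b : ℝ}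
    (ha : 0 ≤ a) (ha1 : a ≤ 1) (hb : 0 ≤ b) (hq : ∀ᶠ k in atTop, a ≤ ν (q k) b)
    {x c : ℝ} (hx : b < x) (hc : c < a) : ∀ᶠ k in atTop, c < ν (q k + r k) x := by
  obtain ⟨t1, t2, t3, t4, t5, t6⟩ := id h.tri
  have hS := stp_ddf ha ha1 hb
  have hw := t6 _ _ _ (fun k => h.ddf (r k)) eps0_ddf hS (hr.weak h)
  rw [t3 _ _ eps0_ddf hS, t5 _ hS] at hw
  have hcont : ContinuousAt (stp a b) x := by
    refine (continuousAt_const (y := a)).congr ?_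
    filter_upwards [lt_mem_nhds hx] with y hy
    simp [stp, not_le.2 hy]
  have hlim := hw x hcont
  have : stp a b x = a := by simp [stp, not_le.2 hx]
  rw [this] at hlim
  filter_upwards [(tendsto_order.1 hlim).1 c hc, hq] with k h1 h2
  refine h1.trans_le ?_
  rw [add_comm]
  refine le_trans ?_ (h.n3 (r k) (q k) x)
  refine tri_mono h.tri (h.ddf _) hS (h.ddf _) (h.ddf _) le_rfl ?_ x
  intro y
  unfold stp
  split_ifs with hy
  · exact (h.ddf _).nonneg y
  · exact h2.trans ((h.ddf _).1 (not_le.1 hy).le)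

lemma SNull.add (h : IsPNSpace V ν τ τs) {q r : ℕ → V} (hq : SNull ν q) (hr : SNull ν r) :
    SNull ν (fun k => q k + r k) := by
  intro x hx c hc
  obtain ⟨a, ha1, ha2⟩ := exists_between (max_lt hc one_pos : max c 0 < 1)
  exact pn_perturb h hr (le_of_lt ((le_max_right _ _).trans_lt ha1)) ha2.le (b := x / 2)
    (by linarith) ((hq (x / 2) (by linarith) a ha2).mono fun k hk => hk.le) (by linarith)
    ((le_max_left _ _).trans_lt ha1)

lemma SNull.smul (h : IsPNSpace V ν τ τs) (harch : IsArchimedean τs)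
    (hne : ∀ p : V, ν p ≠ epsInf) (p : V) {l : ℕ → ℝ} (hl : Tendsto l atTop (𝓝 0)) :
    SNull ν (fun k => l k • p) := by
  intro x hx c hc
  obtain ⟨t, ht, htc⟩ := pn_small h harch hne p hx hc
  have h2 : Tendsto (fun k => |l k|) atTop (𝓝 0) := by simpa using hl.abs
  filter_upwards [(tendsto_order.1 h2).2 t ht] with k hk
  rw [pn_abs h]
  exact htc.trans_le (pn_smul_anti h p (abs_nonneg _) hk.le x)

lemma SNull.sum (h : IsPNSpace V ν τ τs) (harch : IsArchimedean τs)
    (hne : ∀ p : V, ν p ≠ epsInf) {n : ℕ} (p : Fin n → V) {g : ℕ → Fin n → ℝ}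
    (hg : Tendsto g atTop (𝓝 0)) : SNull ν (fun k => ∑ j, g k j • p j) := by
  rw [tendsto_pi_nhds] at hg
  have : ∀ s : Finset (Fin n), SNull ν (fun k => ∑ j ∈ s, g k j • p j) := by
    intro s
    induction s using Finset.induction_on with
    | empty =>
      intro x hx c hc
      refine Eventually.of_forall fun k => ?_
      simp only [Finset.sum_empty]
      rw [(h.n1 0).2 rfl]
      simpa [eps0, not_le.2 hx] using hc
    | insert i s hi ih =>
      simp only [Finset.sum_insert hi]
      exact SNull.add h (SNull.smul h harch hne (p i) (hg i)) ih
  exact this Finset.univ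

lemma pn_closed (h : IsPNSpace V ν τ τs) (harch : IsArchimedean τs)
    (hne : ∀ p : V, ν p ≠ epsInf) {n : ℕ} (p : Fin n → V) {g : ℕ → Fin n → ℝ} {β : Fin n → ℝ}
    (hg : Tendsto g atTop (𝓝 β)) {a b x : ℝ} (ha : 0 ≤ a) (ha1 : a ≤ 1) (hb : 0 ≤ b)
    (hq : ∀ᶠ k in atTop, a ≤ ν (∑ j, g k j • p j) b) (hx : b < x) :
    a ≤ ν (∑ j, β j • p j) x := by
  refine le_of_forall_lt fun c hc => ?_
  have h1 : Tendsto (fun k => β - g k) atTop (𝓝 0) := by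
    simpa using (tendsto_const_nhds (x := β)).sub hg
  obtain ⟨k, hk⟩ := (pn_perturb h (SNull.sum h harch hne p h1) ha ha1 hb hq hx hc).exists
  rw [← Finset.sum_add_distrib] at hk
  simpa [sub_smul] using hk

lemma sphere_seq {n : ℕ} {t : ℝ} (g : ℕ → Fin n → ℝ) (hg : ∀ k, ∑ j, |g k j| = t) :
    ∃ β : Fin n → ℝ, ∑ j, |β j| = t ∧ ∃ f : ℕ → ℕ, StrictMono f ∧
      Tendsto (g ∘ f) atTop (𝓝 β) := by
  have hc : IsCompact {β : Fin n → ℝ | ∑ j, |β j| = t} := by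
    refine Metric.isCompact_of_isClosed_isBounded (isClosed_eq (by fun_prop) continuous_const) ?_
    refine (Metric.isBounded_closedBall (x := (0 : Fin n → ℝ)) (r := t)).subset ?_
    intro β hβ
    have ht : 0 ≤ t := hβ ▸ Finset.sum_nonneg fun j _ => abs_nonneg _
    rw [mem_closedBall_zero_iff, pi_norm_le_iff_of_nonneg ht]
    intro i
    rw [← Set.mem_ofPred.1 hβ, Real.norm_eq_abs]
    exact Finset.single_le_sum (f := fun j => |β j|) (fun j _ => abs_nonneg _) (Finset.mem_univ i)
  obtain ⟨β, hβ, f, hf, hlim⟩ := hc.tendsto_subseq hg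
  exact ⟨β, hβ, f, hf, hlim⟩

def Good (ν : V → ℝ → ℝ) {n : ℕ} (p : Fin n → V) (t s : ℝ) : Prop :=
  ∀ α : Fin n → ℝ, ∑ j, |α j| = t → ν (∑ j, α j • p j) s ≤ Real.exp (-s)

lemma Good.mono (h : IsPNSpace V ν τ τs) {n : ℕ} {p : Fin n → V} {t s t' s' : ℝ}
    (hg : Good ν p t s) (ht0 : 0 < t) (ht : t ≤ t') (hs : s' ≤ s) : Good ν p t' s' := by
  intro α hα
  have ht' : 0 < t' := ht0.trans_le ht
  have h1 := hg ((t / t') • α) (by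
    simp only [Pi.smul_apply, smul_eq_mul, abs_mul, ← Finset.mul_sum, hα]
    rw [abs_of_pos (by positivity), div_mul_cancel₀ _ ht'.ne'])
  have h2 := pn_smul_le h (∑ j, α j • p j) (l := t / t') (by positivity)
    (div_le_one_of_le₀ ht ht'.le)
  have e : ∑ j, ((t / t') • α) j • p j = (t / t') • ∑ j, α j • p j := by
    simp [Finset.smul_sum, smul_smul]
  rw [e] at h1
  calc ν (∑ j, α j • p j) s' ≤ ν (∑ j, α j • p j) s := (h.ddf _).1 hs
    _ ≤ _ := h2 s
    _ ≤ _ := h1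
    _ ≤ _ := Real.exp_le_exp.2 (by linarith)

lemma sum_ne_zero_of_li {n : ℕ} {p : Fin n → V} (hli : LinearIndependent ℝ p) {β : Fin n → ℝ}
    (hβ : 0 < ∑ j, |β j|) : ∑ j, β j • p j ≠ 0 := by
  intro h0
  have := Fintype.linearIndependent_iff.1 hli β h0
  simp [this] at hβ

lemma good_small (h : IsPNSpace V ν τ τs) (harch : IsArchimedean τs)
    (hne : ∀ p : V, ν p ≠ epsInf) {n : ℕ} {p : Fin n → V} (hli : LinearIndependent ℝ p)
    {t : ℝ} (ht : 0 < t) : ∃ s > 0, Good ν p t s := by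
  by_contra! hcon
  have : ∀ k : ℕ, ∃ α : Fin n → ℝ, ∑ j, |α j| = t ∧
      Real.exp (-(1 / ((k:ℝ) + 1))) < ν (∑ j, α j • p j) (1 / ((k:ℝ) + 1)) := by
    intro k
    have := hcon (1 / ((k:ℝ) + 1)) (by positivity)
    unfold Good at this
    push Not at this
    exact this
  choose g hg1 hg2 using this
  obtain ⟨β, hβ, f, hf, hlim⟩ := sphere_seq g hg1
  apply sum_ne_zero_of_li hli (hβ ▸ ht)
  rw [← h.n1]
  refine le_antisymm (h.ddf _).le_eps0 fun x => ?_
  unfold eps0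
  split_ifs with hx
  · exact (h.ddf _).nonneg x
  have hx : 0 < x := not_le.1 hx
  have hz : Tendsto (fun m : ℕ => 1 / ((m:ℝ) + 1)) atTop (𝓝 0) := tendsto_one_div_add_atTop_nhds_zero_nat
  have he : Tendsto (fun m : ℕ => Real.exp (-(1 / ((m:ℝ) + 1)))) atTop (𝓝 1) := by
    have := (Real.continuous_exp.tendsto _).comp hz.neg
    simpa [Function.comp_def] using this
  refine le_of_tendsto he ?_
  filter_upwards [(tendsto_order.1 hz).2 x hx] with m hm
  refine pn_closed h harch hne p hlim (b := 1 / ((m:ℝ) + 1)) (Real.exp_pos _).le ?_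
    (by positivity) ?_ hm
  · rw [Real.exp_le_one_iff, neg_nonpos]; positivity
  · filter_upwards [eventually_ge_atTop m] with k hk
    have hmk : m ≤ f k := hk.trans (hf.id_le k)
    have hle : 1 / ((f k : ℝ) + 1) ≤ 1 / ((m:ℝ) + 1) := by
      have : (m:ℝ) ≤ f k := by exact_mod_cast hmk
      gcongr
    calc Real.exp (-(1 / ((m:ℝ) + 1))) ≤ Real.exp (-(1 / ((f k:ℝ) + 1))) :=
          Real.exp_le_exp.2 (neg_le_neg hle)
      _ ≤ _ := (hg2 (f k)).le
      _ ≤ _ := (h.ddf _).1 hle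

lemma good_large (h : IsPNSpace V ν τ τs) (harch : IsArchimedean τs)
    (hne : ∀ p : V, ν p ≠ epsInf) {n : ℕ} {p : Fin n → V} (hli : LinearIndependent ℝ p)
    {R : ℝ} (hR : 0 < R) : ∃ t > 0, Good ν p t R := by
  by_contra! hcon
  have : ∀ k : ℕ, ∃ α : Fin n → ℝ, ∑ j, |α j| = 1 ∧
      Real.exp (-R) < ν (((k:ℝ) + 1) • ∑ j, α j • p j) R := by
    intro k
    have := hcon ((k:ℝ) + 1) (by positivity)
    unfold Good at this
    push Not at this
    obtain ⟨α, h1, h2⟩ := this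
    have hk : (0:ℝ) < (k:ℝ) + 1 := by positivity
    refine ⟨((k:ℝ) + 1)⁻¹ • α, ?_, ?_⟩
    · simp only [Pi.smul_apply, smul_eq_mul, abs_mul, ← Finset.mul_sum, h1]
      rw [abs_of_pos (by positivity), inv_mul_cancel₀ hk.ne']
    · have e : ((k:ℝ) + 1) • ∑ j, (((k:ℝ) + 1)⁻¹ • α) j • p j = ∑ j, α j • p j := by
        simp [Finset.smul_sum, smul_smul, ← mul_assoc, mul_inv_cancel₀ hk.ne']
      rw [e]
      exact h2
  choose g hg1 hg2 using this
  obtain ⟨β, hβ, f, hf, hlim⟩ := sphere_seq g hg1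
  have hP : ∑ j, β j • p j ≠ 0 := sum_ne_zero_of_li hli (hβ ▸ one_pos)
  obtain ⟨m, hm⟩ := pn_large h harch hP (x := R + 1) (Real.exp_pos (-R))
  have hlim' : Tendsto (fun k => (2:ℝ) ^ m • (g ∘ f) k) atTop (𝓝 ((2:ℝ) ^ m • β)) :=
    hlim.const_smul _
  have e : ∀ α : Fin n → ℝ, ∑ j, ((2:ℝ) ^ m • α) j • p j = (2:ℝ) ^ m • ∑ j, α j • p j := by
    intro α
    simp [Finset.smul_sum, smul_smul]
  have := pn_closed h harch hne p hlim' (a := Real.exp (-R)) (b := R) (x := R + 1)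
    (Real.exp_pos _).le (by rw [Real.exp_le_one_iff]; linarith) hR.le (by
      filter_upwards [eventually_ge_atTop (2 ^ m)] with k hk
      rw [e]
      refine (hg2 (f k)).le.trans (pn_smul_anti h _ (by positivity) ?_ R)
      have : 2 ^ m ≤ f k := hk.trans (hf.id_le k)
      have : (2:ℝ) ^ m ≤ f k := by exact_mod_cast this
      linarith) (by linarith)
  rw [e] at this
  linarith

lemma exists_phi (h : IsPNSpace V ν τ τs) (harch : IsArchimedean τs)
    (hne : ∀ p : V, ν p ≠ epsInf) {n : ℕ} {p : Fin n → V} (hli : LinearIndependent ℝ p) :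
    ∃ φ : ℝ ≃o ℝ, φ 0 = 0 ∧ ∀ s > 0, Good ν p (φ s) s := by
  set S : ℝ → Set ℝ := fun s => {t | 0 < t ∧ Good ν p t s} with hS
  have hSne : ∀ s > 0, (S s).Nonempty := fun s hs => by
    obtain ⟨t, ht, hg⟩ := good_large h harch hne hli hs
    exact ⟨t, ht, hg⟩
  have hSb : ∀ s, BddBelow (S s) := fun s => ⟨0, fun t ht => ht.1.le⟩
  set w : ℝ → ℝ := fun s => if s ≤ 0 then 0 else sInf (S s) with hw
  have hS0 : ∀ s, 0 ≤ sInf (S s) := fun s => Real.sInf_nonneg fun t ht => ht.1.le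
  have hwm : Monotone w := by
    intro s s' hss
    simp only [hw]
    split_ifs with h1 h2 h2
    · rfl
    · exact hS0 _
    · linarith
    · exact csInf_le_csInf (hSb _) (hSne _ (not_le.1 h2))
        fun t ht => ⟨ht.1, ht.2.mono h ht.1 le_rfl hss⟩
  obtain ⟨φ, h0, hφ⟩ := exists_majorant hwm (fun s hs => by simp [hw, hs]) (by
    intro e he
    obtain ⟨s, hs, hg⟩ := good_small h harch hne hli (half_pos he)
    refine ⟨s, hs, ?_⟩
    simp only [hw, not_le.2 hs, if_false]
    exact (csInf_le (hSb s) ⟨half_pos he, hg⟩).trans_lt (by linarith))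
  refine ⟨φ, h0, fun s hs => ?_⟩
  have := hφ s hs
  simp only [hw, not_le.2 hs, if_false] at this
  obtain ⟨t, ht, hlt⟩ := exists_lt_of_csInf_lt (hSne s hs) this
  exact ht.2.mono h ht.1 hlt.le le_rfl

end PN

/-- For a linearly independent family in a strong-TVS PN space there are
`c ≠ 0` and a strong-TVS probabilistic norm `ν'` on `ℝ` with
`ν (∑ αⱼ pⱼ) ≤ ν' (c (∑ |αⱼ|))`. -/
theorem statement7 {V : Type} [AddCommGroup V] [Module ℝ V]
    (ν : V → ℝ → ℝ) (τ τs : (ℝ → ℝ) → (ℝ → ℝ) → (ℝ → ℝ))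
    (h : IsPNSpace V ν τ τs) (harch : IsArchimedean τs)
    (hne : ∀ p : V, ν p ≠ epsInf)
    {n : ℕ} (p : Fin n → V) (hli : LinearIndependent ℝ p) :
    ∃ c : ℝ, c ≠ 0 ∧
      ∃ (ν' : ℝ → ℝ → ℝ) (τ' τ's : (ℝ → ℝ) → (ℝ → ℝ) → (ℝ → ℝ)),
        IsPNSpace ℝ ν' τ' τ's ∧ IsArchimedean τ's ∧ (∀ r : ℝ, ν' r ≠ epsInf) ∧
        ∀ α : Fin n → ℝ,
          ν (∑ j, α j • p j) ≤ ν' (c * ∑ j, |α j|) := by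
  obtain ⟨φ, h0, hφ⟩ := exists_phi h harch hne hli
  have k0 : psi φ.symm 0 = 0 := psi_zero _
  have k1 : psi φ.symm 1 = 1 := psi_one (symm_fix h0)
  refine ⟨1, one_ne_zero, fun r => cj φ (psi φ.symm) (fam |r|), tauC φ (psi φ.symm),
    tauC φ (psi φ.symm), cj_pn h0 k0 k1, tauC_arch h0 k0 k1, fun r => cj_fam_ne_inf k0 _, ?_⟩
  intro α x
  have hn : 0 ≤ ∑ j, |α j| := Finset.sum_nonneg fun j _ => abs_nonneg _
  simp only [one_mul, abs_of_nonneg hn]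
  generalize ht : ∑ j, |α j| = t at hn
  rcases hn.eq_or_lt with h00 | htp
  · subst h00
    rw [fam_zero, cj_eps0 h0 k0 k1]
    exact (h.ddf _).le_eps0 x
  rcases le_or_gt x 0 with hx | hx
  · rw [(h.ddf _).2.1 x hx]
    exact (cj_ddf h0 k0 k1 (fam_ddf t)).nonneg x
  have hφx : 0 < φ x := h0 ▸ φ.strictMono hx
  simp only [cj, fam, not_le.2 hφx, if_false]
  rcases le_total t (φ x) with hle | hle
  · rw [min_eq_left (by rw [Real.one_le_exp_iff]; linarith), k1]
    exact (h.ddf _).2.2.1 x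
  · rw [min_eq_right (by rw [Real.exp_le_one_iff]; linarith)]
    have hs : x ≤ φ.symm t := by rwa [OrderIso.le_symm_apply]
    have hg := hφ (φ.symm t) (hx.trans_le hs)
    rw [OrderIso.apply_symm_apply] at hg
    calc ν (∑ j, α j • p j) x ≤ ν (∑ j, α j • p j) (φ.symm t) := (h.ddf _).1 hs
      _ ≤ Real.exp (-φ.symm t) := hg α ht
      _ = psi φ.symm (Real.exp (-t)) := (psi_exp _ _).symm
      _ ≤ _ := (psi φ.symm).monotone (Real.exp_le_exp.2 (by linarith))
end
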